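/- If (β_1,…,β_l) is a quiver exceptional sequence of Q, then hom_Q(β_i,β_j)=0 for all i ≠ j, ext_Q(β_i,β_j) = −⟨β_i,β_j⟩ for all i ≠ j, and β_1,…,β_l are linearly independent over ℚ. -/

import Mathlib

set_option autoImplicit false

noncomputable section

open scoped BigOperators

/-! Basic setup for representations of a quiver with vertex set `V`, arrow set `A`,
tail map `t` and head map `h`, over a field `K`. -/

variable (K : Type) [Field K]
variable {V A : Type} [Fintype V] [DecidableEq V] [Fintype A]

/-- The Euler form of the quiver `(V, A, t, h)`. -/
def eulerForm {R : Type} [CommRing R] (t h : A → V) (x y : V → R) : R :=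
  ∑ i, x i * y i - ∑ a, x (t a) * y (h a)

def natZ (x : V → ℕ) : V → ℤ := fun i => (x i : ℤ)
def intQ (x : V → ℤ) : V → ℚ := fun i => (x i : ℚ)
def natQ (x : V → ℕ) : V → ℚ := fun i => (x i : ℚ)

/-- The weight `⟨α,·⟩`. -/
def weightL (t h : A → V) (α : V → ℤ) : V → ℤ :=
  fun i => eulerForm t h α (fun j => if j = i then 1 else 0)

/-- The weight `−⟨·,α⟩`. -/
def weightR (t h : A → V) (α : V → ℤ) : V → ℤ :=
  fun i => - eulerForm t h (fun j => if j = i then 1 else 0) α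

/-- `IsPathFrom t h i p j` : the list of arrows `p` is a path from `i` to `j`. -/
def IsPathFrom (t h : A → V) : V → List A → V → Prop
  | i, [], j => i = j
  | i, a :: p, j => t a = i ∧ IsPathFrom t h (h a) p j

/-- The quiver has no (nontrivial) oriented cycles. -/
def Acyclic (t h : A → V) : Prop := ∀ (i : V) (p : List A), IsPathFrom t h i p i → p = []

/-- The dimension vector `γ_i` of the projective indecomposable at `i`:
`γ_i(j)` is the number of paths from `i` to `j`. -/
def gammaRoot (t h : A → V) (i : V) : V → ℕ :=
  fun j => Set.ncard {p : List A | IsPathFrom t h i p j}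

/-- A finite-dimensional representation of the quiver `(V, A, t, h)` over `K`. -/
structure QuivRep (K : Type) [Field K] (V A : Type) (t h : A → V) : Type 1 where
  sp : V → Type
  [inst1 : ∀ i, AddCommGroup (sp i)]
  [inst2 : ∀ i, Module K (sp i)]
  [inst3 : ∀ i, FiniteDimensional K (sp i)]
  map : ∀ a : A, sp (t a) →ₗ[K] sp (h a)

attribute [instance] QuivRep.inst1 QuivRep.inst2 QuivRep.inst3

namespace QuivRep

variable {K} {t h : A → V}

/-- The dimension vector of a representation. -/
def dimVec (X : QuivRep K V A t h) : V → ℕ := fun i => Module.finrank K (X.sp i)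

/-- A subrepresentation. -/
structure Sub (X : QuivRep K V A t h) where
  sub : ∀ i, Submodule K (X.sp i)
  le : ∀ a : A, ∀ x ∈ sub (t a), X.map a x ∈ sub (h a)

/-- The dimension vector of a subrepresentation. -/
def Sub.dimVec {X : QuivRep K V A t h} (U : Sub X) : V → ℕ :=
  fun i => Module.finrank K (U.sub i)

/-- The space `Hom_Q(X,Y)` of morphisms of representations, as a submodule of
`Π i, Hom_K(X(i),Y(i))`. -/
def homS (X Y : QuivRep K V A t h) : Submodule K (∀ i, X.sp i →ₗ[K] Y.sp i) where
  carrier := {φ | ∀ a : A, (φ (h a)).comp (X.map a) = (Y.map a).comp (φ (t a))}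
  zero_mem' := by intro a; simp
  add_mem' := by
    intro f g hf hg a
    simp only [Pi.add_apply, LinearMap.add_comp, LinearMap.comp_add, hf a, hg a]
  smul_mem' := by
    intro c f hf a
    simp only [Pi.smul_apply, LinearMap.smul_comp, LinearMap.comp_smul, hf a]

/-- The dimension of `Hom_Q(X,Y)`. -/
def homDim (X Y : QuivRep K V A t h) : ℕ := Module.finrank K (homS X Y)

/-- The map `d^X_Y` from Ringel's canonical exact sequence. -/
def dmap (X Y : QuivRep K V A t h) :
    (∀ i, X.sp i →ₗ[K] Y.sp i) →ₗ[K] (∀ a : A, X.sp (t a) →ₗ[K] Y.sp (h a)) where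
  toFun φ := fun a => (φ (h a)).comp (X.map a) - (Y.map a).comp (φ (t a))
  map_add' f g := by
    funext a
    simp only [Pi.add_apply, LinearMap.add_comp, LinearMap.comp_add]
    abel
  map_smul' c f := by
    funext a
    simp only [Pi.smul_apply, LinearMap.smul_comp, LinearMap.comp_smul, smul_sub,
      RingHom.id_apply]

/-- The dimension of `Ext^1_Q(X,Y)`, i.e. of the cokernel of `d^X_Y`. -/
def extDim (X Y : QuivRep K V A t h) : ℕ :=
  Module.finrank K ((∀ a : A, X.sp (t a) →ₗ[K] Y.sp (h a)) ⧸ LinearMap.range (dmap X Y))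

/-- A rigid representation: `Ext^1_Q(X,X) = 0`. -/
def IsRigid (X : QuivRep K V A t h) : Prop := extDim X X = 0

/-- A Schur representation: `End_Q(X) = K·id`. -/
def IsSchur (X : QuivRep K V A t h) : Prop := homDim X X = 1

/-- An exceptional representation: rigid and Schur. -/
def IsExceptional (X : QuivRep K V A t h) : Prop := IsRigid X ∧ IsSchur X

end QuivRep

/-- `β` is a real Schur root: the dimension vector of an exceptional representation. -/
def isRealSchurRoot (t h : A → V) (β : V → ℕ) : Prop :=
  ∃ X : QuivRep K V A t h, X.dimVec = β ∧ X.IsExceptional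

/-- `ext_Q(α,β)` : the generic (minimal) value of `dim Ext^1_Q` on pairs of
representations of dimension vectors `α`, `β`. -/
def extMin (t h : A → V) (α β : V → ℕ) : ℕ :=
  sInf {n | ∃ X Y : QuivRep K V A t h, X.dimVec = α ∧ Y.dimVec = β ∧ QuivRep.extDim X Y = n}

/-- `hom_Q(α,β)` : the generic (minimal) value of `dim Hom_Q`. -/
def homMin (t h : A → V) (α β : V → ℕ) : ℕ :=
  sInf {n | ∃ X Y : QuivRep K V A t h, X.dimVec = α ∧ Y.dimVec = β ∧ QuivRep.homDim X Y = n}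

/-- `β' ↪ β` : every representation of dimension vector `β` has a subrepresentation of
dimension vector `β'`. -/
def Embeds (t h : A → V) (β' β : V → ℕ) : Prop :=
  ∀ X : QuivRep K V A t h, X.dimVec = β → ∃ U : QuivRep.Sub X, U.dimVec = β'

/-- `σ`-semi-stability of a representation. -/
def IsSemistable {t h : A → V} (σ : V → ℤ) (X : QuivRep K V A t h) : Prop :=
  (∑ i, σ i * (X.dimVec i : ℤ)) = 0 ∧
  ∀ U : QuivRep.Sub X, (∑ i, σ i * (U.dimVec i : ℤ)) ≤ 0

/-- `σ`-stability of a representation. -/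
def IsStable {t h : A → V} (σ : V → ℤ) (X : QuivRep K V A t h) : Prop :=
  (∑ i, σ i * (X.dimVec i : ℤ)) = 0 ∧ X.dimVec ≠ (fun _ => 0) ∧
  ∀ U : QuivRep.Sub X, U.dimVec ≠ (fun _ => 0) → U.dimVec ≠ X.dimVec →
    (∑ i, σ i * (U.dimVec i : ℤ)) < 0

/-- Isomorphism of representations. -/
def RepIso {t h : A → V} (X Y : QuivRep K V A t h) : Prop :=
  ∃ e : ∀ i, X.sp i ≃ₗ[K] Y.sp i,
    ∀ (a : A) (x : X.sp (t a)), e (h a) (X.map a x) = Y.map a (e (t a) x)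

/-- A quiver exceptional sequence of dimension vectors. -/
def IsQES (t h : A → V) {l : ℕ} (b : Fin l → V → ℕ) : Prop :=
  (∀ j, isRealSchurRoot K t h (b j)) ∧
  ∀ i j : Fin l, i < j →
    homMin K t h (b i) (b j) = 0 ∧ extMin K t h (b i) (b j) = 0 ∧
      eulerForm t h (natZ (b j)) (natZ (b i)) ≤ 0

/-- The cone of nonnegative rational linear combinations of a finite set of integral
vectors. -/
def coneOf (C : Finset (V → ℤ)) : Set (V → ℚ) :=
  {x | ∃ lam : (V → ℤ) → ℚ, (∀ c, 0 ≤ lam c) ∧ x = ∑ c ∈ C, lam c • intQ c}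

/-- A compatible subset of the set `Ψ(Q)_{≥ -1}` of almost positive real Schur roots. -/
def IsCompatible (t h : A → V) (C : Finset (V → ℤ)) : Prop :=
  (∀ x ∈ C, (∃ β : V → ℕ, isRealSchurRoot K t h β ∧ x = natZ β) ∨
      (∃ i : V, x = fun j => -(gammaRoot t h i j : ℤ))) ∧
  (∀ x ∈ C, ∀ y ∈ C, x ≠ y →
    (∀ β₁ β₂ : V → ℕ, isRealSchurRoot K t h β₁ → isRealSchurRoot K t h β₂ →
      x = natZ β₁ → y = natZ β₂ → extMin K t h β₁ β₂ = 0) ∧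
    (∀ (β : V → ℕ) (i : V), isRealSchurRoot K t h β →
      x = natZ β → y = (fun j => -(gammaRoot t h i j : ℤ)) → β i = 0))

/-- The domain of semi-invariants `D(β) ⊆ ℚ^{Q_0}`. -/
def Dom (t h : A → V) (β : V → ℕ) : Set (V → ℚ) :=
  {x | eulerForm t h x (natQ β) = 0 ∧
    ∀ β' : V → ℕ, Embeds K t h β' β → eulerForm t h x (natQ β') ≤ 0}

/-- A quiver exceptional set: a subset of `Ψ(Q)_{≥ -1}` of the form
`{β_1,…,β_l, −γ_{i_{l+1}},…,−γ_{i_m}}` with `β_j(i_k) = 0` and whose real-Schur-root part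
can be ordered into a quiver exceptional sequence. -/
def IsQExcSet (t h : A → V) (E : Finset (V → ℤ)) : Prop :=
  ∃ (l m : ℕ) (b : Fin l → V → ℕ) (g : Fin m → V),
    Function.Injective b ∧ Function.Injective g ∧ IsQES K t h b ∧
    (∀ j k, b j (g k) = 0) ∧
    (E : Set (V → ℤ)) =
      (Set.range fun j => natZ (b j)) ∪
      (Set.range fun k => (fun v => -(gammaRoot t h (g k) v : ℤ)))


/-- The underlying graph of the quiver is connected. -/
def IsConnectedQuiver (t h : A → V) : Prop :=
  ∀ i j : V,
    Relation.ReflTransGen (fun u v => ∃ a, (t a = u ∧ h a = v) ∨ (t a = v ∧ h a = u)) i j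

/-- Morphisms of representations. -/
structure RepHom {K : Type} [Field K] {V A : Type} {t h : A → V}
    (X Y : QuivRep K V A t h) : Type where
  app : ∀ i, X.sp i →ₗ[K] Y.sp i
  comm : ∀ a : A, (app (h a)).comp (X.map a) = (Y.map a).comp (app (t a))

namespace RepHom

variable {K₀ : Type} [Field K₀] {t h : A → V}

/-- The identity morphism. -/
def idHom (X : QuivRep K₀ V A t h) : RepHom X X :=
  ⟨fun _ => LinearMap.id, fun a => by ext x; simp⟩

/-- Composition of morphisms. -/
def comp {X Y Z : QuivRep K₀ V A t h} (f : RepHom X Y) (g : RepHom Y Z) : RepHom X Z :=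
  ⟨fun i => (g.app i).comp (f.app i), fun a => by
    ext x
    have hf := LinearMap.congr_fun (f.comm a) x
    have hg := LinearMap.congr_fun (g.comm a) (f.app (t a) x)
    simp only [LinearMap.comp_apply] at hf hg ⊢
    rw [hf, hg]⟩

/-- Sum of morphisms. -/
def add {X Y : QuivRep K₀ V A t h} (f g : RepHom X Y) : RepHom X Y :=
  ⟨fun i => f.app i + g.app i, fun a => by
    simp only [LinearMap.add_comp, LinearMap.comp_add, f.comm a, g.comm a]⟩

/-- Scalar multiple of a morphism. -/
def smul {X Y : QuivRep K₀ V A t h} (c : K₀) (f : RepHom X Y) : RepHom X Y :=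
  ⟨fun i => c • f.app i, fun a => by
    simp only [LinearMap.smul_comp, LinearMap.comp_smul, f.comm a]⟩

end RepHom

/-- The number of arrows `i → j` in the Ext-quiver `Q(𝓔)` of a sequence of dimension
vectors: `−⟨β_i, β_j⟩` for `i ≠ j`. -/
def extMult (t h : A → V) {l : ℕ} (b : Fin l → V → ℕ) (i j : Fin l) : ℕ :=
  if i = j then 0 else (-(eulerForm t h (natZ (b i)) (natZ (b j)))).toNat

/-- The arrow set of the Ext-quiver `Q(𝓔)`. -/
abbrev ExtArrow (t h : A → V) {l : ℕ} (b : Fin l → V → ℕ) : Type :=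
  (i : Fin l) × (j : Fin l) × Fin (extMult t h b i j)

/-- The representation space `rep(Q,β)` as a product of matrix spaces. -/
abbrev RepSpace (t h : A → V) (β : V → ℕ) : Type :=
  ∀ a : A, Matrix (Fin (β (h a))) (Fin (β (t a))) K

/-- The (base-change) action of `GL(β)` on `rep(Q,β)`. -/
def glAct (t h : A → V) {β : V → ℕ}
    (g : ∀ i, Matrix.GeneralLinearGroup (Fin (β i)) K) (W : RepSpace K t h β) :
    RepSpace K t h β :=
  fun a => (g (h a) : Matrix (Fin (β (h a))) (Fin (β (h a))) K) * W a *
    (((g (t a))⁻¹ : Matrix.GeneralLinearGroup (Fin (β (t a))) K) :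
      Matrix (Fin (β (t a))) (Fin (β (t a))) K)

/-- A polynomial function on `rep(Q,β)`. -/
def IsPolyFun (t h : A → V) {β : V → ℕ} (f : RepSpace K t h β → K) : Prop :=
  ∃ P : MvPolynomial ((a : A) × (Fin (β (h a)) × Fin (β (t a)))) K,
    ∀ W, f W = MvPolynomial.eval (fun x => W x.1 x.2.1 x.2.2) P

/-- The weight space `SI(Q,β)_σ` of semi-invariant polynomial functions of weight `σ`. -/
def SIweight (t h : A → V) (β : V → ℕ) (σ : V → ℤ) :
    Submodule K (RepSpace K t h β → K) where
  carrier := {f | IsPolyFun K t h f ∧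
    ∀ (g : ∀ i, Matrix.GeneralLinearGroup (Fin (β i)) K) (W : RepSpace K t h β),
      f (glAct K t h g W) =
        (((∏ i, (Matrix.GeneralLinearGroup.det (g i)) ^ σ i : Kˣ) : K)) * f W}
  zero_mem' := by
    refine ⟨⟨0, by simp⟩, by simp⟩
  add_mem' := by
    rintro f g ⟨⟨P, hP⟩, hf⟩ ⟨⟨Q, hQ⟩, hg⟩
    refine ⟨⟨P + Q, fun W => ?_⟩, fun gg W => ?_⟩
    · simp [hP W, hQ W]
    · simp only [Pi.add_apply, hf gg W, hg gg W]; ring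
  smul_mem' := by
    rintro c f ⟨⟨P, hP⟩, hf⟩
    refine ⟨⟨MvPolynomial.C c * P, fun W => ?_⟩, fun gg W => ?_⟩
    · simp [hP W]
    · simp only [Pi.smul_apply, hf gg W, smul_eq_mul]; ring

/-- Entry of a matrix accessed through natural-number indices. -/
def entryN {m n : ℕ} (M : Matrix (Fin m) (Fin n) K) (r c : ℕ) : K :=
  if hr : r < m then (if hc : c < n then M ⟨r, hr⟩ ⟨c, hc⟩ else 0) else 0

/-- The matrix of the map `d^V_W` (with `V` of dimension vector `α` varying and `W` of
dimension vector `w` fixed), in the standard bases. -/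
def schofieldMatrix (t h : A → V) {α w : V → ℕ}
    (Vm : RepSpace K t h α) (W : RepSpace K t h w) :
    Matrix ((a : A) × (Fin (w (h a)) × Fin (α (t a)))) ((i : V) × (Fin (w i) × Fin (α i))) K :=
  fun r c =>
    (if c.1 = h r.1 ∧ (c.2.1 : ℕ) = (r.2.1 : ℕ) then
      entryN K (Vm r.1) (c.2.2 : ℕ) (r.2.2 : ℕ) else 0)
    - (if c.1 = t r.1 ∧ (c.2.2 : ℕ) = (r.2.2 : ℕ) then
      entryN K (W r.1) (r.2.1 : ℕ) (c.2.1 : ℕ) else 0)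

/-- The Schofield semi-invariant `c_W : rep(Q,α) → K`, `V ↦ det d^V_W` (defined when
`⟨α, dim W⟩ = 0`, i.e. when `d^V_W` is a square matrix). -/
def schofieldSI (t h : A → V) {α w : V → ℕ} (W : RepSpace K t h w)
    (Vm : RepSpace K t h α) : K :=
  if hc : Fintype.card ((i : V) × (Fin (w i) × Fin (α i))) =
      Fintype.card ((a : A) × (Fin (w (h a)) × Fin (α (t a)))) then
    ((schofieldMatrix K t h Vm W).submatrix (Fintype.equivOfCardEq hc) id).det
  else 0

/-- The representation of `Q` attached to a point of `rep(Q,β)`. -/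
def toRep (t h : A → V) {β : V → ℕ} (W : RepSpace K t h β) : QuivRep K V A t h where
  sp i := Fin (β i) → K
  map a := Matrix.mulVecLin (W a)

/-! Exceptional representations realise the generic dimensions of `Hom` and `Ext¹`. On the line
joining an exceptional `E` to any representation of the same dimension vector, almost every point
`E'` is rigid with `Ext¹(E', E) = 0`, by semicontinuity, and is Schur because `⟨dim E, dim E⟩ = 1`.
The Euler form then gives a nonzero map `E → E'`. By the Happel–Ringel lemma, a nonzero map between
exceptional representations with vanishing `Ext¹` in the opposite direction is injective or
surjective, so `E ≅ E'`. Hence `hom` and `ext` of real Schur roots may be computed on the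
exceptional representations `E_i` themselves.

For `i < j` a nonzero map `E_j → E_i` would likewise be injective or surjective, which forces
`Ext¹(E_j, E_i) = 0` and so `⟨β_j, β_i⟩ > 0`, a contradiction. As `Hom(E_i, E_j)` and
`Ext¹(E_i, E_j)` vanish as well, the Gram matrix of the Euler form on the `β_i` is unitriangular,
which makes them linearly independent. -/

section LinearAlgebra

open Filter Module

variable {K M N : Type*} [Field K] [AddCommGroup M] [Module K M] [AddCommGroup N] [Module K N]

theorem exists_comp_comp_eq_self (f : M →ₗ[K] N) : ∃ u : N →ₗ[K] M, f ∘ₗ u ∘ₗ f = f := by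
  obtain ⟨σ, hσ⟩ := f.rangeRestrict.exists_rightInverse_of_surjective f.range_rangeRestrict
  obtain ⟨π, hπ⟩ := (LinearMap.range f).subtype.exists_leftInverse_of_injective
    (LinearMap.range f).ker_subtype
  refine ⟨σ ∘ₗ π, ?_⟩
  calc f ∘ₗ (σ ∘ₗ π) ∘ₗ f
      = (LinearMap.range f).subtype ∘ₗ (f.rangeRestrict ∘ₗ σ) ∘ₗ
          (π ∘ₗ (LinearMap.range f).subtype) ∘ₗ f.rangeRestrict := rfl
    _ = f := by rw [hσ, hπ]; rfl

theorem finrank_quotient_le_of_surjective [FiniteDimensional K M] {φ : M →ₗ[K] N}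
    (hφ : Function.Surjective φ) {U : Submodule K M} {W : Submodule K N} (h : U ≤ W.comap φ) :
    finrank K (N ⧸ W) ≤ finrank K (M ⧸ U) := by
  refine (U.mapQ W φ h).finrank_le_finrank_of_surjective fun y => ?_
  obtain ⟨n, rfl⟩ := W.mkQ_surjective y
  obtain ⟨m, rfl⟩ := hφ n
  exact ⟨U.mkQ m, rfl⟩

theorem eventually_det_add_smul_ne_zero [FiniteDimensional K M] {f g : End K M} {s₀ : K}
    (h : LinearMap.det (f + s₀ • g) ≠ 0) : ∀ᶠ s : K in cofinite, LinearMap.det (f + s • g) ≠ 0 := by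
  let b := finBasis K M
  let P : Matrix _ _ (Polynomial K) := (LinearMap.toMatrix b b f).map Polynomial.C +
    (Polynomial.X : Polynomial K) • (LinearMap.toMatrix b b g).map Polynomial.C
  have eval_det (s : K) : P.det.eval s = LinearMap.det (f + s • g) := by
    rw [← Polynomial.coe_evalRingHom, RingHom.map_det, ← LinearMap.det_toMatrix b]
    congr 1
    ext i j
    simp [P, mul_comm s]
  have det_ne_zero : P.det ≠ 0 := fun h0 => h (by rw [← eval_det, h0, Polynomial.eval_zero])
  filter_upwards [(Polynomial.finite_setOfPred_isRoot det_ne_zero).compl_mem_cofinite] with s hs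
  rwa [← eval_det]

-- Compressing the pencil to the range of its member at `s₀` turns that member into the identity,
-- so the determinant of the compressed pencil is a nonzero polynomial in `s`.
theorem eventually_finrank_range_add_smul_ge [FiniteDimensional K N] (f g : M →ₗ[K] N) (s₀ : K) :
    ∀ᶠ s : K in cofinite, finrank K (LinearMap.range (f + s₀ • g)) ≤
      finrank K (LinearMap.range (f + s • g)) := by
  obtain ⟨u, hu⟩ := exists_comp_comp_eq_self (f + s₀ • g)
  set R := LinearMap.range (f + s₀ • g)
  let π : N →ₗ[K] R := (f + s₀ • g).rangeRestrict ∘ₗ u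
  let compress (e : M →ₗ[K] N) : End K R := π ∘ₗ e ∘ₗ u ∘ₗ R.subtype
  have compress_pencil (s : K) : compress (f + s • g) = compress f + s • compress g := by
    simp only [compress, LinearMap.add_comp, LinearMap.smul_comp, LinearMap.comp_add,
      LinearMap.comp_smul]
  have compress_self : compress (f + s₀ • g) = LinearMap.id := by
    refine LinearMap.ext ?_
    rintro ⟨_, x, rfl⟩
    have hux := LinearMap.congr_fun hu x
    simp only [LinearMap.comp_apply] at hux
    refine Subtype.ext ?_
    change (f + s₀ • g) (u ((f + s₀ • g) (u ((f + s₀ • g) x)))) = (f + s₀ • g) x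
    rw [hux, hux]
  have det_ne_zero : LinearMap.det (compress f + s₀ • compress g) ≠ 0 := by
    rw [← compress_pencil, compress_self, LinearMap.det_id]
    exact one_ne_zero
  filter_upwards [eventually_det_add_smul_ne_zero det_ne_zero] with s hs
  have compress_surjective : Function.Surjective (compress (f + s • g)) := by
    rw [compress_pencil]
    exact ((Module.End.isUnit_iff _).1 ((LinearMap.isUnit_iff_isUnit_det _).2 hs.isUnit)).surjective
  refine (π.domRestrict (LinearMap.range (f + s • g))).finrank_le_finrank_of_surjective fun y => ?_
  obtain ⟨x, rfl⟩ := compress_surjective y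
  exact ⟨⟨_, u x, rfl⟩, rfl⟩

theorem linearIndependent_of_triangular_pairing {ι R E : Type*} [LinearOrder ι] [CommRing R]
    [NoZeroDivisors R] [AddCommGroup E] [Module R E] (B : E →ₗ[R] E →ₗ[R] R) {v : ι → E}
    (hdiag : ∀ i, B (v i) (v i) ≠ 0) (hlt : ∀ i j, i < j → B (v i) (v j) = 0) :
    LinearIndependent R v := by
  rw [linearIndependent_iff]
  intro c hc
  by_contra hne
  have hsupp : c.support.Nonempty := Finsupp.support_nonempty_iff.2 hne
  let i : ι := c.support.min' hsupp
  have hi : c i ≠ 0 := Finsupp.mem_support_iff.1 (c.support.min'_mem hsupp)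
  refine mul_ne_zero hi (hdiag i) ?_
  calc c i * B (v i) (v i) = ∑ j ∈ c.support, c j * B (v i) (v j) := by
        refine (Finset.sum_eq_single_of_mem (f := fun j => c j * B (v i) (v j)) i
          (c.support.min'_mem hsupp) fun j hj hji => ?_).symm
        rw [hlt i j (lt_of_le_of_ne' (c.support.min'_le j hj) hji), mul_zero]
    _ = B (v i) (Finsupp.linearCombination R v c) := by
        simp [Finsupp.linearCombination_apply, Finsupp.sum]
    _ = 0 := by rw [hc, map_zero]

end LinearAlgebra

namespace QuivRep

open Filter Module

variable {K : Type} [Field K] {V A : Type} {t h : A → V} {E F X Y Z X' Y' : QuivRep K V A t h}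

/-- The domain of `dmap X Y`: a linear map at each vertex, with no compatibility required. -/
abbrev VertexMaps (X Y : QuivRep K V A t h) : Type := ∀ i, X.sp i →ₗ[K] Y.sp i

/-- The codomain of `dmap X Y`: a linear map along each arrow. For `X = Y` this is the space
`rep(Q, dim X)` of all representations on the vector spaces underlying `X`. -/
abbrev ArrowMaps (X Y : QuivRep K V A t h) : Type := ∀ a, X.sp (t a) →ₗ[K] Y.sp (h a)

/-- The point `x` of the representation space `rep(Q, dim E)`, as a representation. -/
abbrev withMap (E : QuivRep K V A t h) (x : ArrowMaps E E) : QuivRep K V A t h where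
  sp := E.sp
  map := x

theorem ker_dmap (X Y : QuivRep K V A t h) : LinearMap.ker (dmap X Y) = homS X Y := by
  ext φ
  exact funext_iff.trans (forall_congr' fun _ => sub_eq_zero)

theorem mem_homS_iff {φ : VertexMaps X Y} : φ ∈ homS X Y ↔ dmap X Y φ = 0 := by
  rw [← ker_dmap, LinearMap.mem_ker]

theorem dmap_comp (φ : VertexMaps X Y) (ψ : VertexMaps Y Z) (a : A) :
    dmap X Z (fun i => ψ i ∘ₗ φ i) a =
      dmap Y Z ψ a ∘ₗ φ (t a) + ψ (h a) ∘ₗ dmap X Y φ a := by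
  ext x
  simp [dmap]

theorem dmap_comp_of_left_mem {φ : VertexMaps X Y} (hφ : φ ∈ homS X Y) (ψ : VertexMaps Y Z)
    (a : A) : dmap X Z (fun i => ψ i ∘ₗ φ i) a = dmap Y Z ψ a ∘ₗ φ (t a) := by
  rw [dmap_comp, mem_homS_iff.1 hφ, Pi.zero_apply, LinearMap.comp_zero, add_zero]

theorem dmap_comp_of_right_mem (φ : VertexMaps X Y) {ψ : VertexMaps Y Z} (hψ : ψ ∈ homS Y Z)
    (a : A) : dmap X Z (fun i => ψ i ∘ₗ φ i) a = ψ (h a) ∘ₗ dmap X Y φ a := by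
  rw [dmap_comp, mem_homS_iff.1 hψ, Pi.zero_apply, LinearMap.zero_comp, zero_add]

theorem id_mem_homS (X : QuivRep K V A t h) : (fun _ => LinearMap.id) ∈ homS X X := fun _ => rfl

section Ext

variable [Finite A]

theorem extDim_eq_zero_iff : extDim X Y = 0 ↔ Function.Surjective (dmap X Y) := by
  rw [extDim, finrank_zero_iff, Submodule.Quotient.subsingleton_iff, LinearMap.range_eq_top]

theorem extDim_le_of_injective {f : VertexMaps X Y} (hf : f ∈ homS X Y)
    (hinj : ∀ i, Function.Injective (f i)) (Z : QuivRep K V A t h) :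
    extDim X Z ≤ extDim Y Z := by
  let precomp : ArrowMaps Y Z →ₗ[K] ArrowMaps X Z :=
    LinearMap.pi fun a => LinearMap.lcomp K _ (f (t a)) ∘ₗ LinearMap.proj a
  choose r hr using fun i => (f i).exists_leftInverse_of_injective (LinearMap.ker_eq_bot.2 (hinj i))
  have precomp_surjective : Function.Surjective precomp := fun c =>
    ⟨fun a => c a ∘ₗ r (t a), funext fun a =>
      show c a ∘ₗ (r (t a) ∘ₗ f (t a)) = c a by rw [hr, LinearMap.comp_id]⟩
  refine finrank_quotient_le_of_surjective precomp_surjective ?_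
  rintro _ ⟨ψ, rfl⟩
  exact ⟨fun i => ψ i ∘ₗ f i, funext (dmap_comp_of_left_mem hf ψ)⟩

theorem extDim_le_of_surjective {f : VertexMaps Y Z} (hf : f ∈ homS Y Z)
    (hsurj : ∀ i, Function.Surjective (f i)) (X : QuivRep K V A t h) :
    extDim X Z ≤ extDim X Y := by
  let postcomp : ArrowMaps X Y →ₗ[K] ArrowMaps X Z :=
    LinearMap.pi fun a => LinearMap.llcomp K _ _ _ (f (h a)) ∘ₗ LinearMap.proj a
  choose r hr using fun i =>
    (f i).exists_rightInverse_of_surjective (LinearMap.range_eq_top.2 (hsurj i))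
  have postcomp_surjective : Function.Surjective postcomp := fun c =>
    ⟨fun a => r (h a) ∘ₗ c a, funext fun a =>
      show (f (h a) ∘ₗ r (h a)) ∘ₗ c a = c a by rw [hr, LinearMap.id_comp]⟩
  refine finrank_quotient_le_of_surjective postcomp_surjective ?_
  rintro _ ⟨φ, rfl⟩
  exact ⟨fun i => f i ∘ₗ φ i, funext (dmap_comp_of_right_mem φ hf)⟩

end Ext

section Iso

theorem repIso_iff : RepIso K X Y ↔ ∃ f ∈ homS X Y, ∀ i, Function.Bijective (f i) := by
  constructor
  · rintro ⟨e, he⟩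
    exact ⟨fun i => e i, fun a => LinearMap.ext (he a), fun i => (e i).bijective⟩
  · rintro ⟨f, hf, hbij⟩
    exact ⟨fun i => LinearEquiv.ofBijective (f i) (hbij i), fun a => LinearMap.congr_fun (hf a)⟩

theorem _root_.RepIso.symm (hXY : RepIso K X Y) : RepIso K Y X := by
  obtain ⟨e, he⟩ := hXY
  refine ⟨fun i => (e i).symm, fun a y => ?_⟩
  rw [LinearEquiv.symm_apply_eq, he, LinearEquiv.apply_symm_apply]

theorem _root_.RepIso.extDim_le [Finite A] (hX : RepIso K X X') (hY : RepIso K Y Y') :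
    extDim X Y ≤ extDim X' Y' := by
  obtain ⟨f, hf, hf_bij⟩ := repIso_iff.1 hX
  obtain ⟨g, hg, hg_bij⟩ := repIso_iff.1 hY.symm
  exact (extDim_le_of_injective hf (fun i => (hf_bij i).1) Y).trans
    (extDim_le_of_surjective hg (fun i => (hg_bij i).2) X')

theorem exists_repIso_withMap (h_dim : X.dimVec = E.dimVec) :
    ∃ x : ArrowMaps E E, RepIso K X (E.withMap x) := by
  let e (i : V) : X.sp i ≃ₗ[K] E.sp i := LinearEquiv.ofFinrankEq _ _ (congrFun h_dim i)
  refine ⟨fun a => e (h a) ∘ₗ X.map a ∘ₗ (e (t a)).symm, e, fun a x => ?_⟩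
  simp

end Iso

theorem IsSchur.exists_eq_smul_id (hX : X.IsSchur) {φ : VertexMaps X X} (hφ : φ ∈ homS X X) :
    ∃ c : K, ∀ i, φ i = c • LinearMap.id := by
  have id_ne_zero : (⟨_, id_mem_homS X⟩ : homS X X) ≠ 0 := by
    intro h_id
    obtain ⟨ψ, hψ, -⟩ := finrank_eq_one_iff'.1 hX
    refine hψ (Subtype.ext (funext fun i => ?_))
    have id_eq_zero : (LinearMap.id : X.sp i →ₗ[K] X.sp i) = 0 :=
      congrFun (congrArg Subtype.val h_id) i
    calc ψ.1 i = ψ.1 i ∘ₗ LinearMap.id := rfl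
      _ = 0 := by rw [id_eq_zero, LinearMap.comp_zero]
  obtain ⟨c, hc⟩ := (finrank_eq_one_iff_of_nonzero' _ id_ne_zero).1 hX ⟨φ, hφ⟩
  exact ⟨c, fun i => (congrFun (congrArg Subtype.val hc) i).symm⟩

-- If `d g = u f (d u)`, then `d (g f) = u d (f u f) = u (d f) = 0` and
-- `d (f (u - g)) = (f - f u f) (d u) = 0`: a linear splitting `u` of `f` splits into two parts
-- that become morphisms on composing with `f`.
theorem exists_comp_mem_homS_of_extDim_eq_zero [Finite A] (hext : extDim Y X = 0)
    {f : VertexMaps X Y} (hf : f ∈ homS X Y) :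
    ∃ g k : VertexMaps Y X, (fun i => g i ∘ₗ f i) ∈ homS X X ∧ (fun i => f i ∘ₗ k i) ∈ homS Y Y ∧
      ∀ i, f i ∘ₗ (g i + k i) ∘ₗ f i = f i := by
  choose u hu using fun i => exists_comp_comp_eq_self (f i)
  obtain ⟨g, hg⟩ := extDim_eq_zero_iff.1 hext fun a => u (h a) ∘ₗ f (h a) ∘ₗ dmap Y X u a
  replace hg (a : A) : dmap Y X g a = u (h a) ∘ₗ f (h a) ∘ₗ dmap Y X u a := congrFun hg a
  have comp_dmap_comp (a : A) : f (h a) ∘ₗ dmap Y X u a ∘ₗ f (t a) = 0 := by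
    rw [← dmap_comp_of_left_mem hf, ← dmap_comp_of_right_mem _ hf]
    simp only [hu]
    rw [mem_homS_iff.1 hf, Pi.zero_apply]
  refine ⟨g, u - g, mem_homS_iff.2 (funext fun a => ?_), mem_homS_iff.2 (funext fun a => ?_),
    fun i => ?_⟩
  · rw [dmap_comp_of_left_mem hf, hg, LinearMap.comp_assoc, LinearMap.comp_assoc, comp_dmap_comp,
      LinearMap.comp_zero, Pi.zero_apply]
  · rw [dmap_comp_of_right_mem _ hf, map_sub, Pi.sub_apply, hg, LinearMap.comp_sub,
      ← LinearMap.comp_assoc, ← LinearMap.comp_assoc, LinearMap.comp_assoc (f _) (u _), hu,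
      sub_self, Pi.zero_apply]
  · rw [Pi.sub_apply, add_sub_cancel, hu]

theorem IsSchur.injective_or_surjective [Finite A] (hE : E.IsSchur) (hF : F.IsSchur)
    (hext : extDim F E = 0) {f : VertexMaps E F} (hf : f ∈ homS E F) (hf0 : f ≠ 0) :
    (∀ i, Function.Injective (f i)) ∨ (∀ i, Function.Surjective (f i)) := by
  obtain ⟨g, k, hgf, hfk, hsplit⟩ := exists_comp_mem_homS_of_extDim_eq_zero hext hf
  obtain ⟨b, hb⟩ := hE.exists_eq_smul_id hgf
  obtain ⟨c, hc⟩ := hF.exists_eq_smul_id hfk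
  have add_smul_eq (i : V) : (b + c) • f i = f i := by
    calc (b + c) • f i = f i ∘ₗ (g i ∘ₗ f i) + (f i ∘ₗ k i) ∘ₗ f i := by
          rw [hb, hc, LinearMap.comp_smul, LinearMap.smul_comp, LinearMap.comp_id,
            LinearMap.id_comp, add_smul]
      _ = f i := by
          rw [LinearMap.comp_assoc, ← LinearMap.comp_add, ← LinearMap.add_comp, hsplit]
  by_cases hb0 : b = 0
  · right
    have hc0 : c ≠ 0 := by
      rintro rfl
      exact hf0 (funext fun i => by simpa [hb0] using (add_smul_eq i).symm)
    exact fun i y => ⟨k i (c⁻¹ • y), (LinearMap.congr_fun (hc i) _).trans (smul_inv_smul₀ hc0 y)⟩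
  · left
    intro i x y hxy
    refine smul_right_injective _ hb0 ?_
    calc b • x = g i (f i x) := (LinearMap.congr_fun (hb i) x).symm
      _ = g i (f i y) := by rw [hxy]
      _ = b • y := LinearMap.congr_fun (hb i) y

theorem exists_mem_homS_ne_zero (h_hom : homDim X Y ≠ 0) : ∃ f ∈ homS X Y, f ≠ 0 := by
  refine Submodule.exists_mem_ne_zero_of_ne_bot fun h_bot => h_hom ?_
  rw [homDim, h_bot, finrank_bot]

theorem IsExceptional.extDim_eq_zero [Finite A] (hE : E.IsExceptional) (hF : F.IsExceptional)
    (hext : extDim F E = 0) (h_hom : homDim E F ≠ 0) : extDim E F = 0 := by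
  obtain ⟨f, hf, hf0⟩ := exists_mem_homS_ne_zero h_hom
  rcases hE.2.injective_or_surjective hF.2 hext hf hf0 with hinj | hsurj
  · exact Nat.eq_zero_of_le_zero ((extDim_le_of_injective hf hinj F).trans_eq hF.1)
  · exact Nat.eq_zero_of_le_zero ((extDim_le_of_surjective hf hsurj E).trans_eq hE.1)

section Euler

variable [Fintype V] [Fintype A]

theorem homDim_sub_extDim (X Y : QuivRep K V A t h) :
    (homDim X Y : ℤ) - extDim X Y = eulerForm t h (natZ X.dimVec) (natZ Y.dimVec) := by
  have rank_nullity := LinearMap.finrank_range_add_finrank_ker (dmap X Y)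
  have rank_coker := Submodule.finrank_quotient_add_finrank (LinearMap.range (dmap X Y))
  rw [ker_dmap] at rank_nullity
  simp only [finrank_pi_fintype, finrank_linearMap] at rank_nullity rank_coker
  simp only [eulerForm, natZ, dimVec, homDim, extDim]
  zify at rank_nullity rank_coker
  linarith

theorem IsExceptional.eulerForm_self (hE : E.IsExceptional) :
    eulerForm t h (natZ E.dimVec) (natZ E.dimVec) = 1 := by
  rw [← homDim_sub_extDim, hE.1, hE.2, Nat.cast_one, Nat.cast_zero, sub_zero]

theorem IsExceptional.homDim_eq_zero (hE : E.IsExceptional) (hF : F.IsExceptional)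
    (hext : extDim F E = 0) (h_euler : eulerForm t h (natZ E.dimVec) (natZ F.dimVec) ≤ 0) :
    homDim E F = 0 := by
  by_contra h_hom
  have euler := homDim_sub_extDim E F
  rw [hE.extDim_eq_zero hF hext h_hom] at euler
  omega

end Euler

section Generic

theorem dmap_withMap_add_smul (x₀ x₁ : ArrowMaps E E) (y₀ y₁ : ArrowMaps F F) (s : K) :
    dmap (E.withMap (x₀ + s • x₁)) (F.withMap (y₀ + s • y₁)) =
      dmap (E.withMap x₀) (F.withMap y₀) + s • dmap (E.withMap x₁) (F.withMap y₁) := by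
  refine LinearMap.ext fun φ => funext fun a => ?_
  simp only [dmap, LinearMap.coe_mk, AddHom.coe_mk, LinearMap.add_apply, LinearMap.smul_apply,
    Pi.add_apply, Pi.smul_apply, LinearMap.comp_add, LinearMap.add_comp, LinearMap.comp_smul,
    LinearMap.smul_comp, smul_sub]
  abel

variable [Finite A]

theorem eventually_extDim_le (x₀ x₁ : ArrowMaps E E) (y₀ y₁ : ArrowMaps F F) (s₀ : K) :
    ∀ᶠ s : K in cofinite, extDim (E.withMap (x₀ + s • x₁)) (F.withMap (y₀ + s • y₁)) ≤
      extDim (E.withMap (x₀ + s₀ • x₁)) (F.withMap (y₀ + s₀ • y₁)) := by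
  let f : VertexMaps E F →ₗ[K] ArrowMaps E F := dmap (E.withMap x₀) (F.withMap y₀)
  let g : VertexMaps E F →ₗ[K] ArrowMaps E F := dmap (E.withMap x₁) (F.withMap y₁)
  have rank_coker (s : K) : extDim (E.withMap (x₀ + s • x₁)) (F.withMap (y₀ + s • y₁)) +
      finrank K (LinearMap.range (f + s • g)) = finrank K (ArrowMaps E F) := by
    rw [extDim, dmap_withMap_add_smul]
    exact Submodule.finrank_quotient_add_finrank _
  filter_upwards [eventually_finrank_range_add_smul_ge f g s₀] with s hs
  have rank_coker_s := rank_coker s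
  have rank_coker_s₀ := rank_coker s₀
  omega

variable [Finite V]

theorem IsExceptional.repIso (hE : E.IsExceptional) (hF : F.IsExceptional)
    (h_dim : E.dimVec = F.dimVec) (hext : extDim F E = 0) : RepIso K E F := by
  cases nonempty_fintype V
  cases nonempty_fintype A
  have h_hom : homDim E F ≠ 0 := by
    have euler := homDim_sub_extDim E F
    rw [← h_dim, hE.eulerForm_self] at euler
    omega
  obtain ⟨f, hf, hf0⟩ := exists_mem_homS_ne_zero h_hom
  have inj_iff_surj (i : V) : Function.Injective (f i) ↔ Function.Surjective (f i) :=
    LinearMap.injective_iff_surjective_of_finrank_eq_finrank (congrFun h_dim i)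
  refine repIso_iff.2 ⟨f, hf, fun i => ?_⟩
  rcases hE.2.injective_or_surjective hF.2 hext hf hf0 with hinj | hsurj
  · exact ⟨hinj i, (inj_iff_surj i).1 (hinj i)⟩
  · exact ⟨(inj_iff_surj i).2 (hsurj i), hsurj i⟩

theorem IsExceptional.eventually_repIso (hE : E.IsExceptional) (x : ArrowMaps E E) :
    ∀ᶠ s : K in cofinite, RepIso K E (E.withMap (E.map + s • x)) := by
  cases nonempty_fintype V
  cases nonempty_fintype A
  filter_upwards [eventually_extDim_le E.map x E.map x 0, eventually_extDim_le E.map x E.map 0 0]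
    with s h_rigid h_ext
  simp only [zero_smul, smul_zero, add_zero] at h_rigid h_ext
  have ext_self : extDim (E.withMap (E.map + s • x)) (E.withMap (E.map + s • x)) = 0 :=
    Nat.eq_zero_of_le_zero (h_rigid.trans_eq hE.1)
  have euler := homDim_sub_extDim (E.withMap (E.map + s • x)) (E.withMap (E.map + s • x))
  have euler_self : eulerForm t h (natZ (E.withMap (E.map + s • x)).dimVec)
    (natZ (E.withMap (E.map + s • x)).dimVec) = 1 := hE.eulerForm_self
  refine hE.repIso ⟨ext_self, ?_⟩ rfl (Nat.eq_zero_of_le_zero (h_ext.trans_eq hE.1))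
  unfold IsSchur
  omega

theorem IsExceptional.extDim_le [Infinite K] (hE : E.IsExceptional) (hF : F.IsExceptional)
    (hX : X.dimVec = E.dimVec) (hY : Y.dimVec = F.dimVec) : extDim E F ≤ extDim X Y := by
  obtain ⟨x, hx⟩ := exists_repIso_withMap hX
  obtain ⟨y, hy⟩ := exists_repIso_withMap hY
  obtain ⟨s, hEs, hFs, hs⟩ := ((hE.eventually_repIso (x - E.map)).and
    ((hF.eventually_repIso (y - F.map)).and
      (eventually_extDim_le E.map (x - E.map) F.map (y - F.map) 1))).exists
  calc extDim E F
      ≤ extDim (E.withMap (E.map + s • (x - E.map))) (F.withMap (F.map + s • (y - F.map))) :=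
        hEs.extDim_le hFs
    _ ≤ extDim (E.withMap x) (F.withMap y) := by
        simpa only [one_smul, add_sub_cancel] using hs
    _ ≤ extDim X Y := hx.symm.extDim_le hy.symm

theorem IsExceptional.extMin_eq [Infinite K] (hE : E.IsExceptional) (hF : F.IsExceptional) :
    extMin K t h E.dimVec F.dimVec = extDim E F := by
  refine le_antisymm (Nat.sInf_le ⟨E, F, rfl, rfl, rfl⟩) (le_csInf ⟨_, E, F, rfl, rfl, rfl⟩ ?_)
  rintro _ ⟨X, Y, hX, hY, rfl⟩
  exact hE.extDim_le hF hX hY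

theorem IsExceptional.homMin_eq [Infinite K] (hE : E.IsExceptional) (hF : F.IsExceptional) :
    homMin K t h E.dimVec F.dimVec = homDim E F := by
  refine le_antisymm (Nat.sInf_le ⟨E, F, rfl, rfl, rfl⟩) (le_csInf ⟨_, E, F, rfl, rfl, rfl⟩ ?_)
  rintro _ ⟨X, Y, hX, hY, rfl⟩
  cases nonempty_fintype V
  cases nonempty_fintype A
  have h_ext := hE.extDim_le hF hX hY
  have euler_EF := homDim_sub_extDim E F
  have euler_XY := homDim_sub_extDim X Y
  rw [hX, hY] at euler_XY
  omega

end Generic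

end QuivRep

section EulerForm

variable {V A : Type} [Fintype V] [Fintype A] (t h : A → V)

/-- The Euler form as a bilinear map, so that its Gram matrix can certify linear independence. -/
def eulerBilin (R : Type) [CommRing R] : (V → R) →ₗ[R] (V → R) →ₗ[R] R :=
  LinearMap.mk₂ R (eulerForm t h)
    (fun x x' y => by
      simp only [eulerForm, Pi.add_apply, add_mul, Finset.sum_add_distrib]
      abel)
    (fun c x y => by simp [eulerForm, mul_sub, Finset.mul_sum, mul_assoc])
    (fun x y y' => by
      simp only [eulerForm, Pi.add_apply, mul_add, Finset.sum_add_distrib]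
      abel)
    (fun c x y => by simp [eulerForm, mul_sub, Finset.mul_sum, mul_left_comm])

theorem eulerBilin_natQ (x y : V → ℕ) :
    eulerBilin t h ℚ (natQ x) (natQ y) = (eulerForm t h (natZ x) (natZ y) : ℤ) := by
  simp [eulerBilin, eulerForm, natQ, natZ]

end EulerForm

theorem stmt8_general (K : Type) [Field K] [Infinite K] {V A : Type} [Fintype V] [Fintype A]
    (t h : A → V) {l : ℕ} (b : Fin l → V → ℕ) (hqes : IsQES K t h b) :
    (∀ i j : Fin l, i ≠ j → homMin K t h (b i) (b j) = 0) ∧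
    (∀ i j : Fin l, i ≠ j →
      (extMin K t h (b i) (b j) : ℤ) = -(eulerForm t h (natZ (b i)) (natZ (b j)))) ∧
    LinearIndependent ℚ (fun j : Fin l => natQ (b j)) := by
  obtain ⟨hroot, hseq⟩ := hqes
  choose E hEb hE using hroot
  obtain rfl : (fun j => (E j).dimVec) = b := funext hEb
  simp only [(hE _).homMin_eq (hE _), (hE _).extMin_eq (hE _)] at hseq ⊢
  have hom_zero (i j : Fin l) (hij : i ≠ j) : (E i).homDim (E j) = 0 := by
    rcases hij.lt_or_gt with hlt | hgt
    · exact (hseq i j hlt).1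
    · exact (hE i).homDim_eq_zero (hE j) (hseq j i hgt).2.1 (hseq j i hgt).2.2
  refine ⟨hom_zero, fun i j hij => ?_, ?_⟩
  · rw [← QuivRep.homDim_sub_extDim, hom_zero i j hij, Nat.cast_zero, zero_sub, neg_neg]
  · refine linearIndependent_of_triangular_pairing (eulerBilin t h ℚ) (fun i => ?_)
      fun i j hij => ?_
    · rw [eulerBilin_natQ, (hE i).eulerForm_self, Int.cast_one]
      exact one_ne_zero
    · rw [eulerBilin_natQ, ← QuivRep.homDim_sub_extDim, (hseq i j hij).1, (hseq i j hij).2.1,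
        Nat.cast_zero, sub_zero, Int.cast_zero]

/-- For a quiver exceptional sequence `(β_1, …, β_l)`:
`hom_Q(β_i,β_j) = 0` and `ext_Q(β_i,β_j) = −⟨β_i,β_j⟩` for all `i ≠ j`, and the `β_i`
are linearly independent over `ℚ`. -/
theorem stmt8 [IsAlgClosed K] [CharZero K] (t h : A → V) (hQ : Acyclic t h)
    {l : ℕ} (b : Fin l → V → ℕ) (hqes : IsQES K t h b) :
    (∀ i j : Fin l, i ≠ j → homMin K t h (b i) (b j) = 0) ∧
    (∀ i j : Fin l, i ≠ j →
      (extMin K t h (b i) (b j) : ℤ) = -(eulerForm t h (natZ (b i)) (natZ (b j)))) ∧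
    LinearIndependent ℚ (fun j : Fin l => natQ (b j)) := by
  have : Infinite K := IsAlgClosed.instInfinite
  exact stmt8_general K t h b hqes
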